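/- Let $C$ be a linear code of length $n$ and dimension $k$ over a field $F$ with generator matrix $G$. If $C_s$ is a punctured code of $C$ of dimension $k - 1$, then $d_{\min}(C) \leq n - |\mathrm{Supp}(C_s)|$, where $\mathrm{Supp}(C_s)$ is the set of coordinates on which $C_s$ is supported. -/

import Mathlib

open Finset

variable (F : Type*) [Field F] [DecidableEq F] (n : ℕ)

/-- The linear map restricting a word of length `n` to the coordinates in `S`
(setting the remaining coordinates to zero). -/
def puncProj (S : Finset (Fin n)) : (Fin n → F) →ₗ[F] (Fin n → F) where
  toFun c := fun j => if j ∈ S then c j else 0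
  map_add' x y := by funext j; by_cases h : j ∈ S <;> simp [h]
  map_smul' a x := by funext j; by_cases h : j ∈ S <;> simp [h]

/-- The punctured code of `C` obtained by restricting to the coordinate set `S`. -/
def puncture (C : Submodule F (Fin n → F)) (S : Finset (Fin n)) :
    Submodule F (Fin n → F) :=
  C.map (puncProj F n S)

/-- `C` has all-symbol `(r,δ)`-locality: every coordinate in the support of `C`
lies in the support of a punctured code of dimension at most `r` and minimum
distance at least `δ`. -/
def HasLocality (C : Submodule F (Fin n → F)) (r δ : ℕ) : Prop :=
  ∀ i : Fin n, (∃ c ∈ C, c i ≠ 0) →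
    ∃ S : Finset (Fin n),
      (∃ c ∈ puncture F n C S, c i ≠ 0) ∧
      Module.finrank F ↥(puncture F n C S) ≤ r ∧
      ∀ c ∈ puncture F n C S, c ≠ 0 → δ ≤ hammingNorm c

/-- `d` is the minimum Hamming distance of the linear code `C`. -/
def IsMinDist (C : Submodule F (Fin n → F)) (d : ℕ) : Prop :=
  (∃ c ∈ C, c ≠ 0 ∧ hammingNorm c = d) ∧ ∀ c ∈ C, c ≠ 0 → d ≤ hammingNorm c

section LinearAlgebra

variable {R V W : Type*} [Ring R] [AddCommGroup V] [AddCommGroup W] [Module R V] [Module R W]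
  {p : Submodule R V} {f : V →ₗ[R] W}

theorem finrank_map_eq_of_disjoint_ker (h : Disjoint p (LinearMap.ker f)) :
    Module.finrank R (p.map f) = Module.finrank R p := by
  rw [← LinearMap.range_domRestrict]
  exact LinearMap.finrank_range_of_inj (LinearMap.injective_domRestrict_iff.mpr h)

theorem exists_mem_ker_ne_zero_of_finrank_map_lt
    (h : Module.finrank R (p.map f) < Module.finrank R p) : ∃ x ∈ p, f x = 0 ∧ x ≠ 0 := by
  by_contra! hp
  exact h.ne (finrank_map_eq_of_disjoint_ker (LinearMap.disjoint_ker.mpr hp))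

end LinearAlgebra

theorem hammingNorm_le_card_compl {ι : Type*} [Fintype ι] [DecidableEq ι] {β : ι → Type*}
    [∀ i, DecidableEq (β i)] [∀ i, Zero (β i)] {x : ∀ i, β i} {S : Finset ι}
    (hx : ∀ i ∈ S, x i = 0) : hammingNorm x ≤ #Sᶜ :=
  card_le_card fun i hi => mem_compl.mpr fun hiS => (mem_filter.mp hi).2 (hx i hiS)

section Puncturing

variable {K : Type*} [Field K] {m : ℕ} (C : Submodule K (Fin m → K)) (S : Finset (Fin m))

theorem puncProj_apply (c : Fin m → K) (i : Fin m) :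
    puncProj K m S c i = if i ∈ S then c i else 0 :=
  rfl

variable {S} in
theorem puncProj_eq_zero_iff {c : Fin m → K} : puncProj K m S c = 0 ↔ ∀ i ∈ S, c i = 0 := by
  simp [funext_iff, puncProj_apply]

theorem support_puncture_subset :
    {i : Fin m | ∃ c ∈ puncture K m C S, c i ≠ 0} ⊆ S := by
  rintro i ⟨_, ⟨c, -, rfl⟩, hci⟩
  by_contra hiS
  exact hci ((puncProj_apply S c i).trans (if_neg hiS))

theorem ncard_support_puncture_le_card :
    {i : Fin m | ∃ c ∈ puncture K m C S, c i ≠ 0}.ncard ≤ #S := by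
  simpa only [Set.ncard_coe_finset] using Set.ncard_le_ncard (support_puncture_subset C S)

end Puncturing

theorem minDist_le_of_punctured_general {d : ℕ} {C : Submodule F (Fin n → F)}
    (hd : IsMinDist F n C d) {S : Finset (Fin n)}
    (hS : Module.finrank F (puncture F n C S) < Module.finrank F C) : d ≤ n - #S := by
  obtain ⟨c, hcC, hcS, hc_ne⟩ := exists_mem_ker_ne_zero_of_finrank_map_lt hS
  calc
    d ≤ hammingNorm c := hd.2 c hcC hc_ne
    _ ≤ #Sᶜ := hammingNorm_le_card_compl (puncProj_eq_zero_iff.mp hcS)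
    _ = n - #S := by rw [card_compl, Fintype.card_fin]

/-- If a punctured code of `C` has dimension `k - 1`, then the minimum distance
of `C` is at most `n` minus the size of the support of the punctured code. -/
theorem minDist_le_of_punctured (k d : ℕ) (C : Submodule F (Fin n → F))
    (hk : Module.finrank F C = k) (hkpos : 0 < k)
    (hd : IsMinDist F n C d) (S : Finset (Fin n))
    (hS : Module.finrank F ↥(puncture F n C S) = k - 1) :
    d ≤ n - {i : Fin n | ∃ c ∈ puncture F n C S, c i ≠ 0}.ncard := by
  exact (minDist_le_of_punctured_general F n hd (by omega)).trans
    (Nat.sub_le_sub_left (ncard_support_puncture_le_card C S) n)
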